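/- arXiv:2306.01866 — 2 statements merged into one kernel-verified Lean document; each statement's English description precedes it below -/
import Mathlib

section
/- On a hyperkähler manifold with a vector field T preserving the hyperkähler structure and moment maps x_i (dx_i = -ι_T ω_i), the flow of I_1 T preserves the complex symplectic structure (I_1, ω_2 + iω_3): L_{I_1T} ω_2 = 0 and L_{I_1T} ω_3 = 0. -/
noncomputable section
open scoped RealInnerProductSpace

/-- The totally antisymmetric Levi-Civita symbol on `Fin 3`. -/
def eps (i j k : Fin 3) : ℝ :=
  if (i, j, k) = (0, 1, 2) ∨ (i, j, k) = (1, 2, 0) ∨ (i, j, k) = (2, 0, 1) then 1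
  else if (i, j, k) = (0, 2, 1) ∨ (i, j, k) = (2, 1, 0) ∨ (i, j, k) = (1, 0, 2) then -1
  else 0

/-- Lie bracket of vector fields on a normed space (local chart model). -/
def lieB {E : Type*} [NormedAddCommGroup E] [NormedSpace ℝ E]
    (X Y : E → E) (p : E) : E :=
  fderiv ℝ Y p (X p) - fderiv ℝ X p (Y p)

/-- Lie derivative of a covariant 2-tensor `β` along the vector field `X`, evaluated
on vector fields `Y`, `Z` at `p`:
`(L_X β)(Y,Z) = X(β(Y,Z)) - β([X,Y],Z) - β(Y,[X,Z])`. -/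
def lie2Form {E : Type*} [NormedAddCommGroup E] [NormedSpace ℝ E]
    (X : E → E) (β : E → E →L[ℝ] E →L[ℝ] ℝ) (Y Z : E → E) (p : E) : ℝ :=
  fderiv ℝ (fun q => β q (Y q) (Z q)) p (X p)
    - β p (lieB X Y p) (Z p) - β p (Y p) (lieB X Z p)

/-- Exterior derivative of a 2-form `β` at `p`, on the vectors `u`, `v`, `w`. -/
def d2Form {E : Type*} [NormedAddCommGroup E] [NormedSpace ℝ E]
    (β : E → E →L[ℝ] E →L[ℝ] ℝ) (p : E) (u v w : E) : ℝ :=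
  fderiv ℝ β p u v w - fderiv ℝ β p v u w + fderiv ℝ β p w u v

/-!
By Cartan's formula `L_X ω = ι_X dω + d(ι_X ω)`, a vector field preserves a closed `2`-form as soon
as its contraction with the form is exact. For `i ≠ j` the quaternion relations give
`ι_{I_i T} ω_j = ∑ k, ε_{jik} ι_T ω_k = -∑ k, ε_{jik} dx_k`, which is exact.
-/

section CartanFormula

variable {E : Type*} [NormedAddCommGroup E] [NormedSpace ℝ E]

/-- Interior product `ι_X β` of a vector field `X` with a 2-form `β`, used for Cartan's formula;
`X` is inserted in the first slot. -/
def interiorProduct (X : E → E) (β : E → E →L[ℝ] E →L[ℝ] ℝ) (p : E) : E →L[ℝ] ℝ :=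
  β p (X p)

/-- Exterior derivative of a 1-form `α` at `p`, on the vectors `u`, `v`, used for Cartan's formula;
normalized without a factor `1 / 2`, in accordance with `d2Form`. -/
def d1Form (α : E → E →L[ℝ] ℝ) (p u v : E) : ℝ :=
  fderiv ℝ α p u v - fderiv ℝ α p v u

variable {X Y Z : E → E} {β : E → E →L[ℝ] E →L[ℝ] ℝ} {f : E → ℝ} {p : E}

theorem hasFDerivAt_interiorProduct (hβ : DifferentiableAt ℝ β p) (hX : DifferentiableAt ℝ X p) :
    HasFDerivAt (interiorProduct X β)
      ((β p).comp (fderiv ℝ X p) + (fderiv ℝ β p).flip (X p)) p :=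
  hβ.hasFDerivAt.clm_apply hX.hasFDerivAt

theorem d1Form_interiorProduct (hβ : DifferentiableAt ℝ β p) (hX : DifferentiableAt ℝ X p)
    (u v : E) :
    d1Form (interiorProduct X β) p u v =
      β p (fderiv ℝ X p u) v + fderiv ℝ β p u (X p) v
        - (β p (fderiv ℝ X p v) u + fderiv ℝ β p v (X p) u) := by
  rw [d1Form, (hasFDerivAt_interiorProduct hβ hX).fderiv]
  rfl

theorem d1Form_fderiv (hf : Differentiable ℝ f) (hf' : DifferentiableAt ℝ (fderiv ℝ f) p)
    (u v : E) : d1Form (fderiv ℝ f) p u v = 0 :=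
  sub_eq_zero.2 <|
    second_derivative_symmetric (fun q => (hf q).hasFDerivAt) hf'.hasFDerivAt u v

-- The derivatives of `Y` and `Z` cancel against those in the brackets.
theorem lie2Form_eq_fderiv (hβ : DifferentiableAt ℝ β p) (hY : DifferentiableAt ℝ Y p)
    (hZ : DifferentiableAt ℝ Z p) :
    lie2Form X β Y Z p =
      fderiv ℝ β p (X p) (Y p) (Z p)
        + β p (fderiv ℝ X p (Y p)) (Z p) + β p (Y p) (fderiv ℝ X p (Z p)) := by
  have product_rule : fderiv ℝ (fun q => β q (Y q) (Z q)) p (X p) =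
      β p (Y p) (fderiv ℝ Z p (X p))
        + (β p (fderiv ℝ Y p (X p)) (Z p) + fderiv ℝ β p (X p) (Y p) (Z p)) := by
    rw [((hβ.hasFDerivAt.clm_apply hY.hasFDerivAt).clm_apply hZ.hasFDerivAt).fderiv]
    rfl
  simp only [lie2Form, lieB, product_rule, map_sub, sub_apply]
  ring

theorem lie2Form_eq_d1Form_interiorProduct_add_d2Form (hβ : DifferentiableAt ℝ β p)
    (hβ_skew : ∀ u v, β p u v = -β p v u) (hX : DifferentiableAt ℝ X p)
    (hY : DifferentiableAt ℝ Y p) (hZ : DifferentiableAt ℝ Z p) :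
    lie2Form X β Y Z p =
      d1Form (interiorProduct X β) p (Y p) (Z p) + d2Form β p (X p) (Y p) (Z p) := by
  rw [lie2Form_eq_fderiv hβ hY hZ, d1Form_interiorProduct hβ hX, d2Form,
    hβ_skew (Y p) (fderiv ℝ X p (Z p))]
  ring

theorem lie2Form_eq_zero_of_interiorProduct_eq_fderiv (hβ : DifferentiableAt ℝ β p)
    (hβ_skew : ∀ u v, β p u v = -β p v u) (hβ_closed : ∀ u v w, d2Form β p u v w = 0)
    (hX : DifferentiableAt ℝ X p) (hf : Differentiable ℝ f)
    (hXβ : interiorProduct X β = fderiv ℝ f)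
    (hY : DifferentiableAt ℝ Y p) (hZ : DifferentiableAt ℝ Z p) :
    lie2Form X β Y Z p = 0 := by
  have hf' : DifferentiableAt ℝ (fderiv ℝ f) p :=
    hXβ ▸ (hasFDerivAt_interiorProduct hβ hX).differentiableAt
  rw [lie2Form_eq_d1Form_interiorProduct_add_d2Form hβ hβ_skew hX hY hZ, hXβ,
    d1Form_fderiv hf hf', hβ_closed, add_zero]

end CartanFormula

section Hyperkahler

variable {E : Type*} [NormedAddCommGroup E] [NormedSpace ℝ E]
  {g : E → E →L[ℝ] E →L[ℝ] ℝ} {I : Fin 3 → E → E →L[ℝ] E} {ω : Fin 3 → E → E →L[ℝ] E →L[ℝ] ℝ}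
  {T : E → E} {x : Fin 3 → E → ℝ}

theorem comp_skew_of_symm {B : E →L[ℝ] E →L[ℝ] ℝ} {J : E →L[ℝ] E}
    (hB : ∀ u v, B u v = B v u) (hJ : ∀ u v, B (J u) v = -B u (J v)) (u v : E) :
    B.comp J u v = -B.comp J v u :=
  (hJ u v).trans (congrArg Neg.neg (hB u (J v)))

theorem interiorProduct_complexStructure
    (hquat : ∀ i j p (v : E),
      I i p (I j p v) = (∑ k, eps i j k • I k p v) - (if i = j then v else 0))
    (hω : ∀ i p, ω i p = (g p).comp (I i p)) {i j : Fin 3} (hij : i ≠ j) (p : E) :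
    interiorProduct (fun q => I i q (T q)) (ω j) p =
      ∑ k, eps j i k • interiorProduct T (ω k) p := by
  simp only [interiorProduct, hω, ContinuousLinearMap.comp_apply, hquat, if_neg hij.symm,
    sub_zero, map_sum, map_smul]

theorem interiorProduct_complexStructure_eq_fderiv
    (hquat : ∀ i j p (v : E),
      I i p (I j p v) = (∑ k, eps i j k • I k p v) - (if i = j then v else 0))
    (hω : ∀ i p, ω i p = (g p).comp (I i p)) (hx : ∀ i, Differentiable ℝ (x i))
    (hdx : ∀ i p (v : E), fderiv ℝ (x i) p v = -(ω i p (T p) v)) {i j : Fin 3} (hij : i ≠ j) :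
    interiorProduct (fun q => I i q (T q)) (ω j) =
      fderiv ℝ (fun q => -∑ k, eps j i k • x k q) := by
  funext p
  have contraction (k : Fin 3) : interiorProduct T (ω k) p = -fderiv ℝ (x k) p := by
    ext v
    exact (neg_eq_iff_eq_neg.2 (hdx k p v)).symm
  have derivative : HasFDerivAt (fun q => -∑ k, eps j i k • x k q)
      (-∑ k, eps j i k • fderiv ℝ (x k) p) p :=
    (HasFDerivAt.fun_sum fun k _ => (hx k p).hasFDerivAt.const_smul (eps j i k)).neg
  rw [interiorProduct_complexStructure hquat hω hij, derivative.fderiv]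
  simp only [contraction, smul_neg, Finset.sum_neg_distrib]

theorem stmt6_general
    (hg : Differentiable ℝ g) (hg_symm : ∀ p u v, g p u v = g p v u)
    (hI : ∀ i, Differentiable ℝ (I i))
    (hquat : ∀ i j p (v : E),
      I i p (I j p v) = (∑ k, eps i j k • I k p v) - (if i = j then v else 0))
    (hskew : ∀ i p (u v : E), g p (I i p u) v = -g p u (I i p v))
    (hω : ∀ i p, ω i p = (g p).comp (I i p))
    (hclosed : ∀ i p (u v w : E), d2Form (ω i) p u v w = 0)
    (hT : Differentiable ℝ T) (hx : ∀ i, Differentiable ℝ (x i))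
    (hdx : ∀ i p (v : E), fderiv ℝ (x i) p v = -(ω i p (T p) v))
    {i j : Fin 3} (hij : i ≠ j) {Y Z : E → E} {p : E}
    (hY : DifferentiableAt ℝ Y p) (hZ : DifferentiableAt ℝ Z p) :
    lie2Form (fun q => I i q (T q)) (ω j) Y Z p = 0 := by
  have hω_diff : Differentiable ℝ (ω j) := by
    rw [funext (hω j)]
    exact hg.clm_comp (hI j)
  have hω_skew (u v : E) : ω j p u v = -ω j p v u := by
    rw [hω]
    exact comp_skew_of_symm (hg_symm p) (hskew j p) u v
  exact lie2Form_eq_zero_of_interiorProduct_eq_fderiv (hω_diff p) hω_skew (hclosed j p)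
    ((hI i).clm_apply hT p) (Differentiable.fun_sum fun k _ => (hx k).const_smul (eps j i k)).neg
    (interiorProduct_complexStructure_eq_fderiv hquat hω hx hdx hij) hY hZ

end Hyperkahler

/-- on a hyperkähler manifold with a vector field `T` preserving the
hyperkähler structure and moment maps `x_i` (`dx_i = -ι_T ω_i`), the flow of `I₁ T`
preserves the complex symplectic structure `(I₁, ω₂ + iω₃)`:
`L_{I₁T} ω₂ = 0` and `L_{I₁T} ω₃ = 0`. -/
theorem stmt6 {E : Type*} [NormedAddCommGroup E] [InnerProductSpace ℝ E]
    -- the hyperkähler metric (in a chart)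
    (g : E → E →L[ℝ] E →L[ℝ] ℝ) (hgc : ContDiff ℝ (⊤ : ℕ∞) g)
    (hgsymm : ∀ p u v, g p u v = g p v u)
    -- the three complex structures
    (I : Fin 3 → E → E →L[ℝ] E) (hIc : ∀ i, ContDiff ℝ (⊤ : ℕ∞) (I i))
    (hquat : ∀ i j p (v : E),
      I i p (I j p v) = (∑ k, eps i j k • I k p v) - (if i = j then v else 0))
    (hskew : ∀ i p (u v : E), g p (I i p u) v = - g p u (I i p v))
    -- the three Kähler forms `ω_i(u,v) = g(I_i u, v)`, each closed (hyperkähler)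
    (ω : Fin 3 → E → E →L[ℝ] E →L[ℝ] ℝ)
    (hω : ∀ i p, ω i p = (g p).comp (I i p))
    (hclosed : ∀ i p (u v w : E), d2Form (ω i) p u v w = 0)
    -- the vector field `T` preserves the hyperkähler structure
    (T : E → E) (hTc : ContDiff ℝ (⊤ : ℕ∞) T)
    (hTg : ∀ (Y Z : E → E), ContDiff ℝ (⊤ : ℕ∞) Y → ContDiff ℝ (⊤ : ℕ∞) Z → ∀ p,
      lie2Form T g Y Z p = 0)
    (hTω : ∀ i (Y Z : E → E), ContDiff ℝ (⊤ : ℕ∞) Y → ContDiff ℝ (⊤ : ℕ∞) Z → ∀ p,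
      lie2Form T (ω i) Y Z p = 0)
    -- the moment maps `x_i`
    (x : Fin 3 → E → ℝ) (hxc : ∀ i, ContDiff ℝ (⊤ : ℕ∞) (x i))
    (hdx : ∀ i p (v : E), fderiv ℝ (x i) p v = -(ω i p (T p) v)) :
    ∀ (Y Z : E → E), ContDiff ℝ (⊤ : ℕ∞) Y → ContDiff ℝ (⊤ : ℕ∞) Z → ∀ p,
      lie2Form (fun q => I 0 q (T q)) (ω 1) Y Z p = 0 ∧
      lie2Form (fun q => I 0 q (T q)) (ω 2) Y Z p = 0 := by
  intro Y Z hY hZ p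
  have infty_ne_zero : ((⊤ : ℕ∞) : WithTop ℕ∞) ≠ 0 := by decide
  have preserves {j : Fin 3} (hj : 0 ≠ j) : lie2Form (fun q => I 0 q (T q)) (ω j) Y Z p = 0 :=
    stmt6_general (hgc.differentiable infty_ne_zero) hgsymm
      (fun i => (hIc i).differentiable infty_ne_zero) hquat hskew hω hclosed
      (hTc.differentiable infty_ne_zero) (fun i => (hxc i).differentiable infty_ne_zero) hdx hj
      (hY.differentiable infty_ne_zero p) (hZ.differentiable infty_ne_zero p)
  exact ⟨preserves (by decide), preserves (by decide)⟩
end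
end

section
/- Under the ODE system r' = 4x₁, x₁' = F with C⁻¹ r ≤ F ≤ C r (C > 1), r > 0, if x₁(0) = 0 and x₁(τ*) = X > 0, then 0 < r(τ*) - r(0) ≤ 4 X τ* ≤ 4C X² / r(0). -/
/-!
The bound `F ≥ C⁻¹ r > 0` makes `x₁` increasing, so `0 ≤ x₁ ≤ X` on `[0, τ*]`. Hence `r` is
increasing with speed at most `4 X`, and `F` stays above `C⁻¹ r(0)`: reaching the level `X` then
takes time at most `C X / r(0)`.
-/

open Set

section MeanValue

variable {f f' g : ℝ → ℝ} {a b : ℝ}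

theorem exists_sub_eq_mul_sub_of_hasDerivWithinAt (hab : a < b)
    (hf : ∀ t ∈ Icc a b, HasDerivWithinAt f (f' t) (Icc a b) t) :
    ∃ c ∈ Ioo a b, f b - f a = f' c * (b - a) := by
  obtain ⟨c, hc, hslope⟩ := exists_hasDerivAt_eq_slope f f' hab
    (HasDerivWithinAt.continuousOn hf)
    (fun t ht ↦ (hf t (Ioo_subset_Icc_self ht)).hasDerivAt (Icc_mem_nhds ht.1 ht.2))
  exact ⟨c, hc, ((eq_div_iff (sub_pos.2 hab).ne').1 hslope).symm⟩

theorem mul_sub_le_sub_of_monotoneOn_of_le_deriv (hab : a < b)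
    (hf : ∀ t ∈ Icc a b, HasDerivWithinAt f (f' t) (Icc a b) t)
    (hg : MonotoneOn g (Icc a b)) (hgf : ∀ t ∈ Ioo a b, g t ≤ f' t) :
    g a * (b - a) ≤ f b - f a := by
  obtain ⟨c, hc, hfc⟩ := exists_sub_eq_mul_sub_of_hasDerivWithinAt hab hf
  have hga : g a ≤ f' c :=
    (hg (left_mem_Icc.2 hab.le) (Ioo_subset_Icc_self hc) hc.1.le).trans (hgf c hc)
  rw [hfc]
  exact mul_le_mul_of_nonneg_right hga (sub_nonneg.2 hab.le)

theorem sub_le_mul_sub_of_monotoneOn_of_deriv_le (hab : a < b)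
    (hf : ∀ t ∈ Icc a b, HasDerivWithinAt f (f' t) (Icc a b) t)
    (hg : MonotoneOn g (Icc a b)) (hfg : ∀ t ∈ Ioo a b, f' t ≤ g t) :
    f b - f a ≤ g b * (b - a) := by
  obtain ⟨c, hc, hfc⟩ := exists_sub_eq_mul_sub_of_hasDerivWithinAt hab hf
  have hgb : f' c ≤ g b :=
    (hfg c hc).trans (hg (Ioo_subset_Icc_self hc) (right_mem_Icc.2 hab.le) hc.2.le)
  rw [hfc]
  exact mul_le_mul_of_nonneg_right hgb (sub_nonneg.2 hab.le)

theorem strictMonoOn_Icc_of_hasDerivWithinAt_pos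
    (hf : ∀ t ∈ Icc a b, HasDerivWithinAt f (f' t) (Icc a b) t)
    (hf' : ∀ t ∈ Ioo a b, 0 < f' t) : StrictMonoOn f (Icc a b) := by
  refine strictMonoOn_of_hasDerivWithinAt_pos (f' := f') (convex_Icc a b)
    (HasDerivWithinAt.continuousOn hf)
    (fun t ht ↦ (hf t (interior_subset ht)).mono interior_subset) ?_
  rwa [interior_Icc]

end MeanValue

theorem sub_le_mul_sub_div_of_inv_mul_le_deriv {C a b : ℝ} {r x F : ℝ → ℝ} (hC : 0 < C)
    (hab : a < b) (hra : 0 < r a) (hr : MonotoneOn r (Icc a b))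
    (hx : ∀ t ∈ Icc a b, HasDerivWithinAt x (F t) (Icc a b) t)
    (hF : ∀ t ∈ Ioo a b, C⁻¹ * r t ≤ F t) :
    b - a ≤ C * (x b - x a) / r a := by
  have hgrowth : C⁻¹ * r a * (b - a) ≤ x b - x a :=
    mul_sub_le_sub_of_monotoneOn_of_le_deriv hab hx
      ((monotone_mul_left_of_nonneg (inv_pos.2 hC).le).comp_monotoneOn hr) hF
  rw [mul_assoc, inv_mul_le_iff₀ hC] at hgrowth
  rwa [le_div_iff₀' hra]

theorem stmt12_general {C τs : ℝ} {r x₁ F : ℝ → ℝ} (hC : 0 < C) (hτs : 0 < τs)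
    (hr : ∀ τ ∈ Icc 0 τs, 0 < r τ) (hF : ∀ τ ∈ Icc 0 τs, C⁻¹ * r τ ≤ F τ)
    (hr' : ∀ τ ∈ Icc 0 τs, HasDerivWithinAt r (4 * x₁ τ) (Icc 0 τs) τ)
    (hx' : ∀ τ ∈ Icc 0 τs, HasDerivWithinAt x₁ (F τ) (Icc 0 τs) τ) (h0 : x₁ 0 = 0) :
    0 < r τs - r 0 ∧ r τs - r 0 ≤ 4 * x₁ τs * τs ∧
      4 * x₁ τs * τs ≤ 4 * C * x₁ τs ^ 2 / r 0 := by
  have h0mem : (0 : ℝ) ∈ Icc 0 τs := left_mem_Icc.2 hτs.le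
  have hτsmem : τs ∈ Icc 0 τs := right_mem_Icc.2 hτs.le
  have hF_Ioo : ∀ τ ∈ Ioo 0 τs, C⁻¹ * r τ ≤ F τ := fun τ hτ ↦ hF τ (Ioo_subset_Icc_self hτ)
  have hx_mono : StrictMonoOn x₁ (Icc 0 τs) :=
    strictMonoOn_Icc_of_hasDerivWithinAt_pos hx' fun τ hτ ↦
      (mul_pos (inv_pos.2 hC) (hr τ (Ioo_subset_Icc_self hτ))).trans_le (hF_Ioo τ hτ)
  have hx_pos : ∀ τ ∈ Ioc 0 τs, 0 < x₁ τ := fun τ hτ ↦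
    h0 ▸ hx_mono h0mem (Ioc_subset_Icc_self hτ) hτ.1
  have hr_mono : StrictMonoOn r (Icc 0 τs) :=
    strictMonoOn_Icc_of_hasDerivWithinAt_pos hr' fun τ hτ ↦
      mul_pos four_pos (hx_pos τ (Ioo_subset_Ioc_self hτ))
  have htime : τs ≤ C * x₁ τs / r 0 := by
    simpa only [h0, sub_zero] using
      sub_le_mul_sub_div_of_inv_mul_le_deriv hC hτs (hr 0 h0mem) hr_mono.monotoneOn hx' hF_Ioo
  refine ⟨sub_pos.2 (hr_mono h0mem hτsmem hτs), ?_, ?_⟩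
  · have hspeed_mono : MonotoneOn (fun τ ↦ 4 * x₁ τ) (Icc 0 τs) :=
      (monotone_mul_left_of_nonneg zero_le_four).comp_monotoneOn hx_mono.monotoneOn
    simpa only [sub_zero] using
      sub_le_mul_sub_of_monotoneOn_of_deriv_le hτs hr' hspeed_mono fun _ _ ↦ le_rfl
  · calc 4 * x₁ τs * τs ≤ 4 * x₁ τs * (C * x₁ τs / r 0) :=
          mul_le_mul_of_nonneg_left htime
            (mul_pos four_pos (hx_pos τs (right_mem_Ioc.2 hτs))).le
      _ = 4 * C * x₁ τs ^ 2 / r 0 := by ring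

/-- for the ODE system `r' = 4x₁`, `x₁' = F` with
`C⁻¹ r ≤ F ≤ C r` (`C > 1`, `r > 0`), if `x₁(0) = 0` and `x₁(τ*) = X > 0` with
`τ* > 0`, then `0 < r(τ*) - r(0) ≤ 4 X τ* ≤ 4 C X² / r(0)`. -/
theorem stmt12 (C : ℝ) (hC : 1 < C) (r x₁ F : ℝ → ℝ)
    (hr : ∀ τ, 0 < r τ)
    (hFl : ∀ τ, C⁻¹ * r τ ≤ F τ) (hFu : ∀ τ, F τ ≤ C * r τ)
    (hr' : ∀ τ, HasDerivAt r (4 * x₁ τ) τ)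
    (hx' : ∀ τ, HasDerivAt x₁ (F τ) τ)
    (τs X : ℝ) (hτs : 0 < τs) (hX : 0 < X)
    (h0 : x₁ 0 = 0) (hXs : x₁ τs = X) :
    0 < r τs - r 0 ∧ r τs - r 0 ≤ 4 * X * τs ∧ 4 * X * τs ≤ 4 * C * X ^ 2 / r 0 := by
  subst hXs
  exact stmt12_general (one_pos.trans hC) hτs (fun τ _ ↦ hr τ) (fun τ _ ↦ hFl τ)
    (fun τ _ ↦ (hr' τ).hasDerivWithinAt) (fun τ _ ↦ (hx' τ).hasDerivWithinAt) h0
end
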